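/- arXiv:1710.09513 — 3 statements merged into one kernel-verified Lean document; each statement's English description precedes it below -/
import Mathlib

section
/- (Extended PMP, Proposition 2, as proved.) Fix ρ > 0. Suppose f(t,·,θ) is twice continuously differentiable in x for each t, θ. Let (X*, P*, θ*) be a tuple satisfying the PMP conditions: Ẋ*_t = f(t, X*_t, θ*_t) with X*_0 = x, Ṗ*_t = −∇_x H(t, X*_t, P*_t, θ*_t) with P*_T = −∇Φ(X*_T), and H(t, X*_t, P*_t, θ*_t) ≥ H(t, X*_t, P*_t, θ) for all θ ∈ Θ and t ∈ [0,T]. Then the tuple satisfies the extended PMP: Ẋ*_t = ∇_p H̃(t, X*_t, P*_t, θ*_t, Ẋ*_t, Ṗ*_t), Ṗ*_t = −∇_x H̃(t, X*_t, P*_t, θ*_t, Ẋ*_t, Ṗ*_t), and H̃(t, X*_t, P*_t, θ*_t, Ẋ*_t, Ṗ*_t) ≥ H̃(t, X*_t, P*_t, θ, Ẋ*_t, Ṗ*_t) for all θ ∈ Θ and t ∈ [0,T]. -/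
open MeasureTheory Set Filter Topology
open scoped RealInnerProductSpace

noncomputable section

/-- Euclidean space `ℝ^n`. -/
abbrev Euc (n : ℕ) : Type := EuclideanSpace ℝ (Fin n)

/-- The control Hamiltonian `H(t, x, p, θ) = ⟪p, f(t, x, θ)⟫ - L(θ)`. -/
def Ham {d m : ℕ} (f : ℝ → Euc d → Euc m → Euc d) (L : Euc m → ℝ)
    (t : ℝ) (x pp : Euc d) (θ : Euc m) : ℝ :=
  ⟪pp, f t x θ⟫ - L θ

/-- The augmented Hamiltonian
`H̃(t,x,p,θ,v,q) = H(t,x,p,θ) - (ρ/2)‖v - f(t,x,θ)‖² - (ρ/2)‖q + ∇ₓH(t,x,p,θ)‖²`. -/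
def augHam {d m : ℕ} (ρ : ℝ) (f : ℝ → Euc d → Euc m → Euc d) (L : Euc m → ℝ)
    (t : ℝ) (x pp : Euc d) (θ : Euc m) (v q : Euc d) : ℝ :=
  Ham f L t x pp θ - ρ / 2 * ‖v - f t x θ‖ ^ 2
    - ρ / 2 * ‖q + gradient (fun y => Ham f L t y pp θ) x‖ ^ 2

/-- Subtracting squares of quantities vanishing at `a` does not change the gradient at `a`. -/
lemma gradient_sub_sq {d : ℕ} (c : ℝ) (g : Euc d → ℝ) (u w : Euc d → Euc d) (a G : Euc d)
    (hg : HasGradientAt g G a) (hu : DifferentiableAt ℝ u a) (hw : DifferentiableAt ℝ w a)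
    (hu0 : u a = 0) (hw0 : w a = 0) :
    gradient (fun y => g y - c * ‖u y‖ ^ 2 - c * ‖w y‖ ^ 2) a = G := by
  apply HasGradientAt.gradient
  rw [hasGradientAt_iff_hasFDerivAt] at hg ⊢
  have h1 := (hu.hasFDerivAt.norm_sq).const_mul c
  have h2 := (hw.hasFDerivAt.norm_sq).const_mul c
  have h := (hg.sub h1).sub h2
  rw [hu0, hw0] at h
  simp only [map_zero, ContinuousLinearMap.zero_comp, smul_zero, sub_zero] at h
  exact h

/-- The gradient in `x` of the Hamiltonian is `(D f)ᵀ p`. -/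
lemma hasGradientAt_Ham {d m : ℕ} (f : ℝ → Euc d → Euc m → Euc d) (L : Euc m → ℝ)
    (t : ℝ) (x pp : Euc d) (θ : Euc m) (h : DifferentiableAt ℝ (fun y => f t y θ) x) :
    HasGradientAt (fun y => Ham f L t y pp θ)
      (ContinuousLinearMap.adjoint (fderiv ℝ (fun y => f t y θ) x) pp) x := by
  rw [hasGradientAt_iff_hasFDerivAt]
  unfold Ham
  have h1 := (((innerSL ℝ pp).hasFDerivAt (x := f t x θ)).comp x h.hasFDerivAt).sub_const (L θ)
  refine h1.congr_fderiv ?_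
  ext v
  simp [ContinuousLinearMap.adjoint_inner_left]

/-- **Extended PMP** (Proposition 2, as proved).  If the tuple `(Xs, Ps, θs)` satisfies the PMP
conditions, then it also satisfies the extended PMP conditions for the augmented Hamiltonian
`H̃` (for any fixed `ρ > 0`). -/
theorem extended_pmp
    (d m : ℕ) (T : ℝ) (hT : 0 < T) (Θ : Set (Euc m)) (ρ : ℝ) (hρ : 0 < ρ)
    (f : ℝ → Euc d → Euc m → Euc d) (L : Euc m → ℝ) (Φ : Euc d → ℝ)
    (x0 : Euc d)
    (hf2 : ∀ (t : ℝ) (θ : Euc m), ContDiff ℝ 2 fun y => f t y θ)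
    (θs : ℝ → Euc m) (hθmeas : Measurable θs) (hθΘ : ∀ t, θs t ∈ Θ)
    (Xs Ps : ℝ → Euc d) (hX0 : Xs 0 = x0)
    (hXode : ∀ t ∈ Icc (0 : ℝ) T, HasDerivAt Xs (f t (Xs t) (θs t)) t)
    (hPT : Ps T = -gradient Φ (Xs T))
    (hPode : ∀ t ∈ Icc (0 : ℝ) T,
      HasDerivAt Ps (-(gradient (fun y => Ham f L t y (Ps t) (θs t)) (Xs t))) t)
    (hmax : ∀ t ∈ Icc (0 : ℝ) T, ∀ θ ∈ Θ,
      Ham f L t (Xs t) (Ps t) θ ≤ Ham f L t (Xs t) (Ps t) (θs t)) :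
    ∀ t ∈ Icc (0 : ℝ) T,
      HasDerivAt Xs
        (gradient
          (fun pp => augHam ρ f L t (Xs t) pp (θs t) (f t (Xs t) (θs t))
            (-(gradient (fun y => Ham f L t y (Ps t) (θs t)) (Xs t)))) (Ps t)) t ∧
      HasDerivAt Ps
        (-(gradient
          (fun y => augHam ρ f L t y (Ps t) (θs t) (f t (Xs t) (θs t))
            (-(gradient (fun z => Ham f L t z (Ps t) (θs t)) (Xs t)))) (Xs t))) t ∧
      ∀ θ ∈ Θ,
        augHam ρ f L t (Xs t) (Ps t) θ (f t (Xs t) (θs t))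
            (-(gradient (fun y => Ham f L t y (Ps t) (θs t)) (Xs t))) ≤
          augHam ρ f L t (Xs t) (Ps t) (θs t) (f t (Xs t) (θs t))
            (-(gradient (fun y => Ham f L t y (Ps t) (θs t)) (Xs t))) := by
  intro t ht
  have hd : ∀ y θ, DifferentiableAt ℝ (fun y => f t y θ) y := fun y θ =>
    ((hf2 t θ).differentiable (by norm_num)) y
  have hgr : ∀ y pp θ, gradient (fun y => Ham f L t y pp θ) y =
      ContinuousLinearMap.adjoint (fderiv ℝ (fun y => f t y θ) y) pp := fun y pp θ =>
    (hasGradientAt_Ham f L t y pp θ (hd y θ)).gradient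
  have hX := hXode t ht
  have hP := hPode t ht
  refine ⟨?_, ?_, ?_⟩
  · have key : gradient
          (fun pp => augHam ρ f L t (Xs t) pp (θs t) (f t (Xs t) (θs t))
            (-(gradient (fun y => Ham f L t y (Ps t) (θs t)) (Xs t)))) (Ps t)
          = f t (Xs t) (θs t) := by
      unfold augHam
      refine gradient_sub_sq (ρ / 2) (fun pp => Ham f L t (Xs t) pp (θs t))
        (fun _ => f t (Xs t) (θs t) - f t (Xs t) (θs t)) _ _ _ ?_ ?_ ?_ (by simp) (by simp)
      · rw [hasGradientAt_iff_hasFDerivAt]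
        have h1 := ((innerSL ℝ (f t (Xs t) (θs t))).hasFDerivAt (x := Ps t)).sub_const (L (θs t))
        unfold Ham
        have e : (fun pp : Euc d => ⟪pp, f t (Xs t) (θs t)⟫ - L (θs t)) =
            fun pp => innerSL ℝ (f t (Xs t) (θs t)) pp - L (θs t) := by
          funext pp
          simp [real_inner_comm]
        rw [e]
        exact h1
      · exact differentiableAt_const _
      · simp only [hgr]
        fun_prop
    rw [key]
    exact hX
  · have key : gradient
          (fun y => augHam ρ f L t y (Ps t) (θs t) (f t (Xs t) (θs t))
            (-(gradient (fun z => Ham f L t z (Ps t) (θs t)) (Xs t)))) (Xs t)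
          = gradient (fun y => Ham f L t y (Ps t) (θs t)) (Xs t) := by
      unfold augHam
      refine gradient_sub_sq (ρ / 2) (fun y => Ham f L t y (Ps t) (θs t))
        (fun y => f t (Xs t) (θs t) - f t y (θs t)) _ _ _ ?_ ?_ ?_ (by simp) (by simp)
      · rw [hgr]
        exact hasGradientAt_Ham f L t _ _ _ (hd _ _)
      · exact (differentiableAt_const _).sub (hd _ _)
      · refine (differentiableAt_const _).add ?_
        have hH : ContDiff ℝ 2 (fun z => Ham f L t z (Ps t) (θs t)) := by
          unfold Ham
          exact (contDiff_const.inner ℝ (hf2 t (θs t))).sub contDiff_const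
        have h1 : Differentiable ℝ (fderiv ℝ (fun z => Ham f L t z (Ps t) (θs t))) :=
          (hH.fderiv_right (m := 1) (by norm_num)).differentiable (by norm_num)
        exact ((InnerProductSpace.toDual ℝ (Euc d)).symm.toContinuousLinearEquiv.differentiableAt).comp
          (Xs t) (h1 (Xs t))
    rw [key]
    exact hP
  · intro θ hθ
    have h := hmax t ht θ hθ
    unfold augHam
    have a1 : 0 ≤ ρ / 2 * ‖f t (Xs t) (θs t) - f t (Xs t) θ‖ ^ 2 := by positivity
    have a2 : 0 ≤ ρ / 2 * ‖-(gradient (fun y => Ham f L t y (Ps t) (θs t)) (Xs t)) +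
      gradient (fun y => Ham f L t y (Ps t) θ) (Xs t)‖ ^ 2 := by positivity
    simp only [sub_self, neg_add_cancel, norm_zero]
    linarith
end
end

section
/- (Characterization of fixed points of E-MSA: the case μ_k = 0.) Let θ : [0,T] → Θ be a measurable control with state X^θ and co-state P^θ (so Ẋ^θ_t = f(t, X^θ_t, θ_t), Ṗ^θ_t = −∇_x H(t, X^θ_t, P^θ_t, θ_t)). Suppose φ : [0,T] → Θ satisfies, for every t ∈ [0,T], φ_t = argmax_{θ′∈Θ} H̃(t, X^θ_t, P^θ_t, θ′, Ẋ^θ_t, Ṗ^θ_t), and suppose μ := ∫₀^T [H(t, X^θ_t, P^θ_t, φ_t) − H(t, X^θ_t, P^θ_t, θ_t)] dt = 0. Then ∫₀^T ‖f(t, X^θ_t, φ_t) − f(t, X^θ_t, θ_t)‖² dt = 0 and ∫₀^T ‖∇_x H(t, X^θ_t, P^θ_t, φ_t) − ∇_x H(t, X^θ_t, P^θ_t, θ_t)‖² dt = 0, and for almost every t ∈ [0,T], θ_t itself maximizes θ′ ↦ H̃(t, X^θ_t, P^θ_t, θ′, Ẋ^θ_t, Ṗ^θ_t) over Θ; that is,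 (X^θ, P^θ, θ) satisfies the extended PMP. -/
open MeasureTheory Set Filter Topology
open scoped RealInnerProductSpace

noncomputable section

/-- **Characterization of fixed points of E-MSA** (the case `μ_k = 0`).  If for every `t` the
value `φ_t` maximizes the augmented Hamiltonian at the state/co-state of `θ` and the Hamiltonian
increment `μ = ∫₀^T ΔH(t) dt` vanishes, then both feasibility-error integrals vanish and for
almost every `t`, `θ_t` itself maximizes the augmented Hamiltonian: `(X^θ, P^θ, θ)` satisfies
the extended PMP. -/
theorem emsa_fixed_point_characterization
    (d m : ℕ) (T : ℝ) (hT : 0 < T) (Θ : Set (Euc m)) (ρ : ℝ) (hρ : 0 < ρ)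
    (f : ℝ → Euc d → Euc m → Euc d) (L : Euc m → ℝ) (Φ : Euc d → ℝ) (x0 : Euc d)
    (hfdiff : ∀ (t : ℝ) (θc : Euc m), ContDiff ℝ 1 fun y => f t y θc)
    (θ φ : ℝ → Euc m) (hθmeas : Measurable θ) (hφmeas : Measurable φ)
    (hθΘ : ∀ t, θ t ∈ Θ) (hφΘ : ∀ t, φ t ∈ Θ)
    (Xθ Pθ : ℝ → Euc d) (hXθ0 : Xθ 0 = x0)
    (hXθode : ∀ t ∈ Icc (0 : ℝ) T, HasDerivAt Xθ (f t (Xθ t) (θ t)) t)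
    (hPθT : Pθ T = -gradient Φ (Xθ T))
    (hPθode : ∀ t ∈ Icc (0 : ℝ) T,
      HasDerivAt Pθ (-(gradient (fun y => Ham f L t y (Pθ t) (θ t)) (Xθ t))) t)
    -- `φ_t` maximizes the augmented Hamiltonian over `Θ` for every `t ∈ [0,T]`
    (hmax : ∀ t ∈ Icc (0 : ℝ) T, ∀ θ' ∈ Θ,
      augHam ρ f L t (Xθ t) (Pθ t) θ' (f t (Xθ t) (θ t))
          (-(gradient (fun y => Ham f L t y (Pθ t) (θ t)) (Xθ t))) ≤
        augHam ρ f L t (Xθ t) (Pθ t) (φ t) (f t (Xθ t) (θ t))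
          (-(gradient (fun y => Ham f L t y (Pθ t) (θ t)) (Xθ t))))
    -- the Hamiltonian increment is a well-defined integral
    (hint : IntervalIntegrable
      (fun t => Ham f L t (Xθ t) (Pθ t) (φ t) - Ham f L t (Xθ t) (Pθ t) (θ t))
      volume 0 T)
    (hμ : ∫ t in (0 : ℝ)..T,
      (Ham f L t (Xθ t) (Pθ t) (φ t) - Ham f L t (Xθ t) (Pθ t) (θ t)) = 0) :
    (∫ t in (0 : ℝ)..T, ‖f t (Xθ t) (φ t) - f t (Xθ t) (θ t)‖ ^ 2 = 0) ∧
    (∫ t in (0 : ℝ)..T,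
      ‖gradient (fun y => Ham f L t y (Pθ t) (φ t)) (Xθ t) -
          gradient (fun y => Ham f L t y (Pθ t) (θ t)) (Xθ t)‖ ^ 2 = 0) ∧
    (∀ᵐ t ∂(volume.restrict (Icc (0 : ℝ) T)), ∀ θ' ∈ Θ,
      augHam ρ f L t (Xθ t) (Pθ t) θ' (f t (Xθ t) (θ t))
          (-(gradient (fun y => Ham f L t y (Pθ t) (θ t)) (Xθ t))) ≤
        augHam ρ f L t (Xθ t) (Pθ t) (θ t) (f t (Xθ t) (θ t))
          (-(gradient (fun y => Ham f L t y (Pθ t) (θ t)) (Xθ t)))) := by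
  have key : ∀ t ∈ Icc (0 : ℝ) T,
      ρ / 2 * ‖f t (Xθ t) (φ t) - f t (Xθ t) (θ t)‖ ^ 2 +
        ρ / 2 * ‖gradient (fun y => Ham f L t y (Pθ t) (φ t)) (Xθ t) -
          gradient (fun y => Ham f L t y (Pθ t) (θ t)) (Xθ t)‖ ^ 2 ≤
      Ham f L t (Xθ t) (Pθ t) (φ t) - Ham f L t (Xθ t) (Pθ t) (θ t) := by
    intro t ht
    have h := hmax t ht (θ t) (hθΘ t)
    unfold augHam at h
    rw [norm_sub_rev (f t (Xθ t) (θ t)) (f t (Xθ t) (φ t)), neg_add_eq_sub, neg_add_eq_sub,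
      sub_self, sub_self, norm_zero] at h
    linarith
  have hnn : ∀ t ∈ Icc (0 : ℝ) T,
      0 ≤ Ham f L t (Xθ t) (Pθ t) (φ t) - Ham f L t (Xθ t) (Pθ t) (θ t) := fun t ht =>
    le_trans (by positivity) (key t ht)
  have hae : ∀ᵐ t ∂(volume.restrict (Ioc (0 : ℝ) T)),
      Ham f L t (Xθ t) (Pθ t) (φ t) - Ham f L t (Xθ t) (Pθ t) (θ t) = 0 := by
    rw [intervalIntegral.integral_of_le hT.le] at hμ
    have h0 : 0 ≤ᵐ[volume.restrict (Ioc (0 : ℝ) T)]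
        fun t => Ham f L t (Xθ t) (Pθ t) (φ t) - Ham f L t (Xθ t) (Pθ t) (θ t) :=
      (ae_restrict_iff' measurableSet_Ioc).2
        (Eventually.of_forall fun t ht => hnn t (Ioc_subset_Icc_self ht))
    exact (integral_eq_zero_iff_of_nonneg_ae h0 hint.1).1 hμ
  have hmem : ∀ᵐ t ∂(volume.restrict (Ioc (0 : ℝ) T)), t ∈ Ioc (0 : ℝ) T :=
    ae_restrict_mem measurableSet_Ioc
  have hz : ∀ᵐ t ∂(volume.restrict (Ioc (0 : ℝ) T)),
      ‖f t (Xθ t) (φ t) - f t (Xθ t) (θ t)‖ ^ 2 = 0 ∧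
      ‖gradient (fun y => Ham f L t y (Pθ t) (φ t)) (Xθ t) -
          gradient (fun y => Ham f L t y (Pθ t) (θ t)) (Xθ t)‖ ^ 2 = 0 := by
    filter_upwards [hae, hmem] with t h1 h2
    have h := key t (Ioc_subset_Icc_self h2)
    rw [h1] at h
    have ha := sq_nonneg ‖f t (Xθ t) (φ t) - f t (Xθ t) (θ t)‖
    have hb := sq_nonneg ‖gradient (fun y => Ham f L t y (Pθ t) (φ t)) (Xθ t) -
          gradient (fun y => Ham f L t y (Pθ t) (θ t)) (Xθ t)‖
    constructor <;> nlinarith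
  refine ⟨?_, ?_, ?_⟩
  · rw [intervalIntegral.integral_of_le hT.le]
    exact integral_eq_zero_of_ae (hz.mono fun t h => h.1)
  · rw [intervalIntegral.integral_of_le hT.le]
    exact integral_eq_zero_of_ae (hz.mono fun t h => h.2)
  · rw [← restrict_Ioc_eq_restrict_Icc]
    filter_upwards [hae, hmem] with t h1 h2 θ' hθ'
    refine (hmax t (Ioc_subset_Icc_self h2) θ' hθ').trans ?_
    unfold augHam
    rw [neg_add_eq_sub, neg_add_eq_sub, sub_self, sub_self, norm_zero]
    have ha : 0 ≤ ρ / 2 * ‖f t (Xθ t) (θ t) - f t (Xθ t) (φ t)‖ ^ 2 := by positivity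
    have hb : 0 ≤ ρ / 2 * ‖gradient (fun y => Ham f L t y (Pθ t) (φ t)) (Xθ t) -
          gradient (fun y => Ham f L t y (Pθ t) (θ t)) (Xθ t)‖ ^ 2 := by positivity
    linarith
end
end

section
/- (MSA with soft maximization equals gradient descent with back-propagation; Proposition 4.) In the discrete-time setting with all g_n(·,·), Φ, and L differentiable, define the co-states p_N := −∇Φ(x_N), p_n := ∇_x H_n(x_n, p_{n+1}, ϑ_n) for n = N−1,…,0, and the total loss J(ϑ) := Φ(x_N) + δ∑_{n=0}^{N−1} L(ϑ_n). Then for every n = 0,…,N−1, ∇_{ϑ_n} J(ϑ) = −∇_ϑ H_n(x_n, p_{n+1}, ϑ_n). Consequently, for any learning rate η > 0, the update ϑ′_n = ϑ_n + η ∇_ϑ H_n(x_n, p_{n+1}, ϑ_n) coincides with the gradient-descent step ϑ′_n = ϑ_n − η ∇_{ϑ_n} J(ϑ). -/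
open Set
open scoped RealInnerProductSpace

noncomputable section

/-- `flow g ϑ n k` is the `k`-step discrete flow starting at layer `n`:
`flow g ϑ n 0 = id` and `flow g ϑ n (k+1) = g (n+k) (flow g ϑ n k ·) (ϑ (n+k))`.
In particular `flow g ϑ 0 n x0` is the layer-`n` state `x_n` with input `x_0 = x0`. -/
def flow {d m : ℕ} (g : ℕ → Euc d → Euc m → Euc d) (ϑ : ℕ → Euc m) (n : ℕ) :
    ℕ → Euc d → Euc d
  | 0 => id
  | k + 1 => fun y => g (n + k) (flow g ϑ n k y) (ϑ (n + k))

/-- The discrete Hamiltonian `H_n(x, p, ϑ) = ⟪p, g_n(x, ϑ)⟫ - δ L(ϑ)`. -/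
def dHam {d m : ℕ} (g : ℕ → Euc d → Euc m → Euc d) (L : Euc m → ℝ) (δ : ℝ)
    (n : ℕ) (x : Euc d) (pp : Euc d) (ϑ : Euc m) : ℝ :=
  ⟪pp, g n x ϑ⟫ - δ * L ϑ

theorem flow_update_le {d m : ℕ} (g : ℕ → Euc d → Euc m → Euc d) (ϑ : ℕ → Euc m) (n : ℕ)
    (w : Euc m) (x0 : Euc d) : ∀ k ≤ n,
    flow g (Function.update ϑ n w) 0 k x0 = flow g ϑ 0 k x0 := by
  intro k
  induction k with
  | zero => intro _; rfl
  | succ k ih =>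
    intro hk
    have h : k ≠ n := by omega
    simp only [flow, zero_add]
    rw [ih (by omega), Function.update_of_ne h]

theorem inner_gradient_eq {d : ℕ} {f : Euc d → ℝ} {f' : Euc d →L[ℝ] ℝ} {x : Euc d}
    (h : HasFDerivAt f f' x) (v : Euc d) : ⟪gradient f x, v⟫ = f' v := by
  unfold gradient
  rw [InnerProductSpace.toDual_symm_apply, h.fderiv]

theorem flow_costate {d m : ℕ} (N : ℕ) (δ : ℝ)
    (g : ℕ → Euc d → Euc m → Euc d) (L : Euc m → ℝ)
    (hg : ∀ n, Differentiable ℝ fun q : Euc d × Euc m => g n q.1 q.2)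
    (ϑ : ℕ → Euc m) (x0 : Euc d) (ps : ℕ → Euc d)
    (hps : ∀ n < N, ps n =
      gradient (fun y => dHam g L δ n y (ps (n + 1)) (ϑ n)) (flow g ϑ 0 n x0))
    (n : ℕ) (B : Euc m →L[ℝ] Euc d)
    (hB : HasFDerivAt (fun w => g n (flow g ϑ 0 n x0) w) B (ϑ n)) (j : ℕ) :
    n + 1 + j ≤ N → ∃ A : Euc m →L[ℝ] Euc d,
      HasFDerivAt (fun w => flow g (Function.update ϑ n w) 0 (n + 1 + j) x0) A (ϑ n) ∧
      ∀ v, ⟪ps (n + 1 + j), A v⟫ = ⟪ps (n + 1), B v⟫ := by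
  induction j with
  | zero =>
    intro _
    refine ⟨B, ?_, fun v => rfl⟩
    convert hB using 2 with w
    simp only [flow, zero_add, add_zero]
    rw [flow_update_le _ _ _ _ _ _ le_rfl, Function.update_self]
  | succ j ih =>
    intro hj
    obtain ⟨A, hA, hAv⟩ := ih (by omega)
    have hne : n + 1 + j ≠ n := by omega
    have hd : DifferentiableAt ℝ (fun y => g (n + 1 + j) y (ϑ (n + 1 + j)))
        (flow g ϑ 0 (n + 1 + j) x0) :=
      ((hg (n + 1 + j)).comp (differentiable_id.prodMk (differentiable_const _))).differentiableAt
    obtain ⟨C, hC⟩ := hd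
    have hC' : HasFDerivAt (fun y => g (n + 1 + j) y (ϑ (n + 1 + j))) C
        (flow g (Function.update ϑ n (ϑ n)) 0 (n + 1 + j) x0) := by
      rw [Function.update_eq_self]; exact hC
    refine ⟨C.comp A, ?_, fun v => ?_⟩
    · have := hC'.comp (ϑ n) hA
      have he : (fun w => flow g (Function.update ϑ n w) 0 (n + 1 + (j + 1)) x0) =
          (fun y => g (n + 1 + j) y (ϑ (n + 1 + j))) ∘
            fun w => flow g (Function.update ϑ n w) 0 (n + 1 + j) x0 := by
        funext w
        have h0 : flow g (Function.update ϑ n w) 0 (n + 1 + (j + 1)) x0 =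
            g (0 + (n + 1 + j)) (flow g (Function.update ϑ n w) 0 (n + 1 + j) x0)
              (Function.update ϑ n w (0 + (n + 1 + j))) := rfl
        rw [h0, zero_add, Function.update_of_ne hne]
        rfl
      rw [he]
      exact this
    · rw [← hAv v, hps (n + 1 + j) (by omega)]
      have hH : HasFDerivAt (fun y => dHam g L δ (n + 1 + j) y (ps (n + 1 + j + 1))
          (ϑ (n + 1 + j))) ((innerSL ℝ (ps (n + 1 + j + 1))).comp C)
          (flow g ϑ 0 (n + 1 + j) x0) := by
        unfold dHam
        exact (((innerSL ℝ (ps (n + 1 + j + 1))).hasFDerivAt).comp _ hC).sub_const _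
      rw [inner_gradient_eq hH]
      rfl

/-- **MSA with soft maximization equals gradient descent with back-propagation**
(Proposition 4).  With states `x_n = flow g ϑ 0 n x0`, co-states `p_N = -∇Φ(x_N)`,
`p_n = ∇ₓH_n(x_n, p_{n+1}, ϑ_n)`, and total loss
`J(ϑ) = Φ(x_N) + δ ∑_{n<N} L(ϑ_n)` (viewed, for each `n`, as a function of the single
parameter `ϑ_n`), one has `∇_{ϑ_n} J(ϑ) = -∇_ϑ H_n(x_n, p_{n+1}, ϑ_n)`; consequently the
soft-maximization update `ϑ_n + η ∇_ϑ H_n` coincides with the gradient-descent step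
`ϑ_n - η ∇_{ϑ_n} J(ϑ)`. -/
theorem msa_soft_maximization_is_backprop
    (d m N : ℕ) (δ : ℝ) (hδ : 0 < δ) (Θ : Set (Euc m)) (hΘ : IsOpen Θ)
    (g : ℕ → Euc d → Euc m → Euc d) (L : Euc m → ℝ) (Φ : Euc d → ℝ)
    (hg : ∀ n, Differentiable ℝ fun q : Euc d × Euc m => g n q.1 q.2)
    (hΦ : Differentiable ℝ Φ) (hL : Differentiable ℝ L)
    (ϑ : ℕ → Euc m) (hϑ : ∀ n, ϑ n ∈ Θ)
    (x0 : Euc d)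
    (ps : ℕ → Euc d)
    (hpN : ps N = -gradient Φ (flow g ϑ 0 N x0))
    (hps : ∀ n < N, ps n =
      gradient (fun y => dHam g L δ n y (ps (n + 1)) (ϑ n)) (flow g ϑ 0 n x0)) :
    ∀ n < N,
      gradient
          (fun w : Euc m =>
            Φ (flow g (Function.update ϑ n w) 0 N x0) +
              δ * ∑ k ∈ Finset.range N, L (Function.update ϑ n w k)) (ϑ n) =
        -(gradient (fun w => dHam g L δ n (flow g ϑ 0 n x0) (ps (n + 1)) w) (ϑ n)) ∧
      ∀ η : ℝ, 0 < η →
        ϑ n + η • gradient (fun w => dHam g L δ n (flow g ϑ 0 n x0) (ps (n + 1)) w) (ϑ n) =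
          ϑ n - η • gradient
            (fun w : Euc m =>
              Φ (flow g (Function.update ϑ n w) 0 N x0) +
                δ * ∑ k ∈ Finset.range N, L (Function.update ϑ n w k)) (ϑ n) := by
  intro n hn
  have key : gradient
          (fun w : Euc m =>
            Φ (flow g (Function.update ϑ n w) 0 N x0) +
              δ * ∑ k ∈ Finset.range N, L (Function.update ϑ n w k)) (ϑ n) =
        -(gradient (fun w => dHam g L δ n (flow g ϑ 0 n x0) (ps (n + 1)) w) (ϑ n)) := by
    have hd : DifferentiableAt ℝ (fun w => g n (flow g ϑ 0 n x0) w) (ϑ n) :=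
      ((hg n).comp ((differentiable_const _).prodMk differentiable_id)).differentiableAt
    obtain ⟨B, hB⟩ := hd
    obtain ⟨l, hl⟩ := hL (ϑ n)
    obtain ⟨j, rfl⟩ : ∃ j, N = n + 1 + j := ⟨N - (n + 1), by omega⟩
    obtain ⟨A, hA, hAv⟩ := flow_costate (n + 1 + j) δ g L hg ϑ x0 ps hps n B hB j le_rfl
    obtain ⟨F, hF⟩ := hΦ (flow g ϑ 0 (n + 1 + j) x0)
    have hF' : HasFDerivAt Φ F (flow g (Function.update ϑ n (ϑ n)) 0 (n + 1 + j) x0) := by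
      rw [Function.update_eq_self]; exact hF
    have hsum : ∀ w, ∑ k ∈ Finset.range (n + 1 + j), L (Function.update ϑ n w k) =
        L w + ∑ k ∈ (Finset.range (n + 1 + j)).erase n, L (ϑ k) := by
      intro w
      rw [← Finset.add_sum_erase _ _ (Finset.mem_range.2 hn), Function.update_self]
      congr 1
      refine Finset.sum_congr rfl fun k hk => ?_
      rw [Function.update_of_ne (Finset.ne_of_mem_erase hk)]
    have hJ : HasFDerivAt (fun w : Euc m =>
            Φ (flow g (Function.update ϑ n w) 0 (n + 1 + j) x0) +
              δ * ∑ k ∈ Finset.range (n + 1 + j), L (Function.update ϑ n w k))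
          (F.comp A + δ • l) (ϑ n) := by
      simp only [hsum]
      exact (hF'.comp (ϑ n) hA).add ((hl.add_const _).const_mul δ)
    have hH : HasFDerivAt (fun w => dHam g L δ n (flow g ϑ 0 n x0) (ps (n + 1)) w)
        ((innerSL ℝ (ps (n + 1))).comp B - δ • l) (ϑ n) := by
      unfold dHam
      exact (((innerSL ℝ (ps (n + 1))).hasFDerivAt).comp _ hB).sub (hl.const_mul δ)
    refine ext_inner_right ℝ fun v => ?_
    rw [inner_neg_left, inner_gradient_eq hJ, inner_gradient_eq hH]
    have h1 := hAv v
    rw [hpN, inner_neg_left, inner_gradient_eq hF] at h1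
    simp only [add_apply, sub_apply, ContinuousLinearMap.comp_apply, innerSL_apply_apply]
    linarith
  refine ⟨key, fun η _ => ?_⟩
  rw [key, smul_neg, sub_neg_eq_add]
end
end
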